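/- arXiv:1811.05410 — 4 statements merged into one kernel-verified Lean document; each statement's English description precedes it below -/
import Mathlib

section
/- Let v ≠ 0 be a variance and let 0 ≤ μ₁ < μ₂ be real numbers. Then gaussianReal μ₂ v ([-1,1]) < gaussianReal μ₁ v ([-1,1]); that is, the probability that a Gaussian random variable with variance v lies in [-1,1] is strictly decreasing in the mean on [0,∞). (Monotonicity step in the proof of Lemma 4.) -/
/-!
Write `g` for the centred Gaussian density and `F(m) = ∫_{-1-m}^{1-m} g` for the mass of `[-1, 1]`
under mean `m`. Cancelling the common part of the two windows and translating by `2` gives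
`F(μ₁) - F(μ₂) = ∫_{1-μ₂}^{1-μ₁} (g(t) - g(t - 2)) dt`.
On this range `t < 1`, because `0 ≤ μ₁`, so `|t| < |t - 2|`; since `g` strictly decreases in the
distance to `0` (`gaussianPDFReal_lt_of_sq_lt`), the integrand is positive.
-/

open ProbabilityTheory MeasureTheory
open scoped NNReal

lemma gaussianPDFReal_lt_of_sq_lt {v : ℝ≥0} (hv : v ≠ 0) {x y : ℝ} (h : x ^ 2 < y ^ 2) :
    gaussianPDFReal 0 v y < gaussianPDFReal 0 v x := by
  have hv' : (0 : ℝ) < v := NNReal.coe_pos.2 (pos_iff_ne_zero.2 hv)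
  simp only [gaussianPDFReal, sub_zero]
  gcongr

lemma gaussianReal_Icc_eq_integral {v : ℝ≥0} (hv : v ≠ 0) (m : ℝ) :
    gaussianReal m v (Set.Icc (-1) 1)
      = ENNReal.ofReal (∫ t in (-1 - m)..(1 - m), gaussianPDFReal 0 v t) := by
  rw [gaussianReal_apply_eq_integral m hv, integral_Icc_eq_integral_Ioc,
    ← intervalIntegral.integral_of_le (by norm_num),
    ← intervalIntegral.integral_comp_sub_right (fun t => gaussianPDFReal 0 v t) m]
  simp only [gaussianPDFReal_sub, zero_add]

/-- Monotonicity step in the proof of Lemma 4: the probability that a Gaussian random variable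
with variance `v ≠ 0` lies in `[-1, 1]` is strictly decreasing in the mean on `[0, ∞)`. -/
theorem gaussian_Icc_strict_anti (v : ℝ≥0) (hv : v ≠ 0) (μ₁ μ₂ : ℝ)
    (hμ₁ : 0 ≤ μ₁) (hμ : μ₁ < μ₂) :
    gaussianReal μ₂ v (Set.Icc (-1) 1) < gaussianReal μ₁ v (Set.Icc (-1) 1) := by
  have hint (a b : ℝ) : IntervalIntegrable (gaussianPDFReal 0 v) volume a b :=
    (integrable_gaussianPDFReal 0 v).intervalIntegrable
  have hint' (a b : ℝ) : IntervalIntegrable (fun t => gaussianPDFReal 0 v (t - 2)) volume a b :=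
    ((integrable_gaussianPDFReal 0 v).comp_sub_right 2).intervalIntegrable
  have hpos : 0 < ∫ t in (1 - μ₂)..(1 - μ₁),
      (gaussianPDFReal 0 v t - gaussianPDFReal 0 v (t - 2)) := by
    refine intervalIntegral.intervalIntegral_pos_of_pos_on ((hint _ _).sub (hint' _ _))
      (fun t ht => sub_pos.2 (gaussianPDFReal_lt_of_sq_lt hv ?_)) (by linarith)
    nlinarith [ht.2]
  rw [intervalIntegral.integral_sub (hint _ _) (hint' _ _),
    intervalIntegral.integral_comp_sub_right (fun t => gaussianPDFReal 0 v t) 2,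
    show 1 - μ₂ - 2 = -1 - μ₂ by ring, show 1 - μ₁ - 2 = -1 - μ₁ by ring] at hpos
  have h₁ := intervalIntegral.integral_add_adjacent_intervals
    (hint (-1 - μ₂) (-1 - μ₁)) (hint (-1 - μ₁) (1 - μ₁))
  have h₂ := intervalIntegral.integral_add_adjacent_intervals
    (hint (-1 - μ₂) (1 - μ₂)) (hint (1 - μ₂) (1 - μ₁))
  have hnonneg : 0 ≤ ∫ t in (-1 - μ₂)..(1 - μ₂), gaussianPDFReal 0 v t :=
    intervalIntegral.integral_nonneg (by linarith) fun t _ => gaussianPDFReal_nonneg 0 v t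
  rw [gaussianReal_Icc_eq_integral hv, gaussianReal_Icc_eq_integral hv]
  exact (ENNReal.ofReal_lt_ofReal_iff_of_nonneg hnonneg).2 (by linarith)
end

section
/- Let v ≠ 0 be a variance and let μ₁, μ₂ ∈ ℝ satisfy |μ₁| ≤ |μ₂|. Then gaussianReal μ₁ v ({x : |x| > 1}) ≤ gaussianReal μ₂ v ({x : |x| > 1}); that is, the probability that a Gaussian random variable with variance v leaves the safety region [-1,1] is nondecreasing in the absolute value of its mean. -/
/-!
By translation and reflection, the exceedance probability for mean `m` is the mass that the centred
Gaussian gives to the complement of the interval of radius `1` about `|m|`. Let `a = |μ₁|` and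
`b = |μ₂|`. Moving the interval from `a` to `b` adds `[a - 1, b - 1)` to the complement and
removes `(a + 1, b + 1]`. These two pieces differ by a translation by `2`, and the centred density
decreases along it, since `|x| ≤ |x + 2|` for `x ≥ -1`, while `a - 1 ≥ -1`.
-/

open ProbabilityTheory
open scoped NNReal

open MeasureTheory Set

lemma gaussianReal_exceedance_eq (v : ℝ≥0) (m : ℝ) :
    gaussianReal m v {x : ℝ | 1 < |x|} = gaussianReal 0 v {x : ℝ | 1 < |x - (|m|)|} := by
  have hs : MeasurableSet {x : ℝ | 1 < |x|} :=
    measurableSet_lt measurable_const measurable_id.abs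
  rcases le_total 0 m with hm | hm
  · have h := gaussianReal_map_const_sub (μ := 0) (v := v) m
    rw [sub_zero] at h
    rw [← h, Measure.map_apply (by fun_prop) hs, abs_of_nonneg hm]
    congr 1
    ext x
    simp [abs_sub_comm]
  · have h := gaussianReal_map_add_const (μ := 0) (v := v) m
    rw [zero_add] at h
    rw [← h, Measure.map_apply (by fun_prop) hs, abs_of_nonpos hm]
    congr 1
    ext x
    simp

lemma gaussianPDF_neg_two_le (v : ℝ≥0) {x : ℝ} (hx : -1 ≤ x) :
    gaussianPDF (-2) v x ≤ gaussianPDF 0 v x := by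
  unfold gaussianPDF gaussianPDFReal
  gcongr ENNReal.ofReal (_ * Real.exp (?_ / _))
  nlinarith

/-- The mass removed when the centre moves from `a` to `b` is at most the mass gained. -/
lemma gaussianReal_Ioc_le_Ico {v : ℝ≥0} (hv : v ≠ 0) {a b : ℝ} (ha : 0 ≤ a) :
    gaussianReal 0 v (Ioc (a + 1) (b + 1)) ≤ gaussianReal 0 v (Ico (a - 1) (b - 1)) := by
  have hshift : gaussianReal 0 v (Ioc (a + 1) (b + 1))
      = gaussianReal (-2) v (Ioc (a - 1) (b - 1)) := by
    have h := gaussianReal_map_sub_const (μ := 0) (v := v) 2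
    rw [zero_sub] at h
    rw [← h, Measure.map_apply (by fun_prop) measurableSet_Ioc]
    congr 1
    ext x
    simp only [mem_Ioc, mem_preimage]
    constructor <;> rintro ⟨h₁, h₂⟩ <;> constructor <;> linarith
  rw [hshift, gaussianReal_apply _ hv, gaussianReal_apply _ hv,
    setLIntegral_congr (Ico_ae_eq_Ioc (μ := volume) (a := a - 1) (b := b - 1))]
  refine setLIntegral_mono (measurable_gaussianPDF 0 v) fun x hx ↦ gaussianPDF_neg_two_le v ?_
  linarith [hx.1]

/-- The probability that a Gaussian random variable with variance `v ≠ 0` leaves the safety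
region `[-1, 1]` is nondecreasing in the absolute value of its mean. -/
theorem gaussian_exceedance_mono (v : ℝ≥0) (hv : v ≠ 0) (μ₁ μ₂ : ℝ) (h : |μ₁| ≤ |μ₂|) :
    gaussianReal μ₁ v {x : ℝ | 1 < |x|} ≤ gaussianReal μ₂ v {x : ℝ | 1 < |x|} := by
  rw [gaussianReal_exceedance_eq v μ₁, gaussianReal_exceedance_eq v μ₂]
  have ha : 0 ≤ |μ₁| := abs_nonneg μ₁
  generalize |μ₁| = a at *
  generalize |μ₂| = b at *
  -- `C` is the part lying in both complements.
  set C : Set ℝ := Iio (a - 1) ∪ Ioi (b + 1) with hC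
  have hCm : MeasurableSet C := measurableSet_Iio.union measurableSet_Ioi
  have hdisj : Disjoint (Ico (a - 1) (b - 1)) C := by
    rw [Set.disjoint_left]
    rintro x ⟨h₁, h₂⟩ (h₃ | h₃)
    · exact absurd h₃ (not_lt.2 h₁)
    · linarith [mem_Ioi.1 h₃]
  calc gaussianReal 0 v {x : ℝ | 1 < |x - a|}
      ≤ gaussianReal 0 v (Ioc (a + 1) (b + 1) ∪ C) := by
        refine measure_mono fun x hx ↦ ?_
        simp only [hC, mem_ofPred_eq, mem_union, mem_Ioc, mem_Iio, mem_Ioi] at hx ⊢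
        rcases lt_abs.1 hx with hx | hx
        · rcases le_or_gt x (b + 1) with hb | hb
          · exact .inl ⟨by linarith, hb⟩
          · exact .inr (.inr hb)
        · exact .inr (.inl (by linarith))
    _ ≤ gaussianReal 0 v (Ioc (a + 1) (b + 1)) + gaussianReal 0 v C := measure_union_le _ _
    _ ≤ gaussianReal 0 v (Ico (a - 1) (b - 1)) + gaussianReal 0 v C := by
        exact add_le_add_left (gaussianReal_Ioc_le_Ico hv ha) _
    _ = gaussianReal 0 v (Ico (a - 1) (b - 1) ∪ C) := (measure_union hdisj hCm).symm
    _ ≤ gaussianReal 0 v {x : ℝ | 1 < |x - b|} := by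
        refine measure_mono ?_
        rintro x (⟨_, h₂⟩ | h₃ | h₃)
        · exact (lt_abs (b := x - b)).2 (.inr (by linarith))
        · exact (lt_abs (b := x - b)).2 (.inr (by linarith [mem_Iio.1 h₃]))
        · exact (lt_abs (b := x - b)).2 (.inl (by linarith [mem_Ioi.1 h₃]))
end

section
/- (Lemma 4) Let C ⊆ ℝⁿ be a symmetric set, let f : ℝⁿ → ℝ be a linear functional, let v ≠ 0 be a variance, and define P(d) = gaussianReal (f d) v ({x : |x| > 1}). If d₁ ∈ C satisfies f d ≤ f d₁ for all d ∈ C (d₁ maximizes the mean over C) and d₂ ∈ C satisfies P d ≤ P d₂ for all d ∈ C (d₂ maximizes the exceedance probability over C), then P d₁ = P d₂. -/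
open ProbabilityTheory
open scoped NNReal ENNReal

/-!
Write `Q m` for the mass that the Gaussian of mean `m` and variance `v` gives to `{x | 1 < |x|}`.
Since the set is symmetric, `Q` is even; and `Q` is monotone on `[0, ∞)`
(`gaussianReal_exceed_mono`). As `C` is symmetric and `f` is linear, maximality of `f d₁` over `C`
says `|f d| ≤ f d₁` on `C`, so `P d = Q |f d| ≤ Q (f d₁) = P d₁`: the mean maximizer also maximizes
`P`.

For the monotonicity one shows that the mass of `[-1, 1]` decreases. Centring the Gaussian, this is
the mass of `[-1 - m, 1 - m]` under the centred density `φ`. Passing from mean `b` to a smaller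
mean `a ≥ 0` gains `[1 - b, 1 - a]` and loses `[-1 - b, -1 - a]`. Translation by `2` carries the
lost interval onto the gained one, and `φ x ≤ φ (x + 2)` for `x ≤ -1`.
-/

open MeasureTheory

/-- The inequality `φ x ≤ φ (x + 2)` holds because `|x + 2| ≤ |x|` when `x ≤ -1`. -/
lemma gaussianPDFReal_le_add_two (v : ℝ≥0) {x : ℝ} (hx : x ≤ -1) :
    gaussianPDFReal 0 v x ≤ gaussianPDFReal 0 v (x + 2) := by
  simp only [gaussianPDFReal, sub_zero]
  gcongr ?_ * Real.exp (?_ / _)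
  nlinarith

lemma gaussianPDFReal_centered (m : ℝ) (v : ℝ≥0) (x : ℝ) :
    gaussianPDFReal m v x = gaussianPDFReal 0 v (x - m) := by
  simp [gaussianPDFReal]

lemma gaussianReal_Icc_eq (m : ℝ) {v : ℝ≥0} (hv : v ≠ 0) :
    gaussianReal m v (Set.Icc (-1) 1)
      = ENNReal.ofReal (∫ x in (-1 - m)..(1 - m), gaussianPDFReal 0 v x) := by
  rw [gaussianReal_apply_eq_integral m hv, integral_Icc_eq_integral_Ioc,
    ← intervalIntegral.integral_of_le (by norm_num)]
  simp_rw [gaussianPDFReal_centered m v]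
  rw [intervalIntegral.integral_comp_sub_right (fun x => gaussianPDFReal 0 v x) m]

lemma gaussianReal_Icc_antitone {v : ℝ≥0} (hv : v ≠ 0) {a b : ℝ} (ha : 0 ≤ a) (hab : a ≤ b) :
    gaussianReal b v (Set.Icc (-1) 1) ≤ gaussianReal a v (Set.Icc (-1) 1) := by
  rw [gaussianReal_Icc_eq b hv, gaussianReal_Icc_eq a hv]
  apply ENNReal.ofReal_le_ofReal
  have hint : ∀ s t : ℝ, IntervalIntegrable (gaussianPDFReal 0 v) volume s t :=
    fun s t => (integrable_gaussianPDFReal 0 v).intervalIntegrable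
  have hshift : ∫ x in (-1 - b)..(-1 - a), gaussianPDFReal 0 v (x + 2)
      = ∫ x in (1 - b)..(1 - a), gaussianPDFReal 0 v x := by
    rw [intervalIntegral.integral_comp_add_right (fun x => gaussianPDFReal 0 v x) 2]
    congr 1 <;> ring
  have hle : ∫ x in (-1 - b)..(-1 - a), gaussianPDFReal 0 v x
      ≤ ∫ x in (-1 - b)..(-1 - a), gaussianPDFReal 0 v (x + 2) := by
    refine intervalIntegral.integral_mono_on (by linarith) (hint _ _)
      ((integrable_gaussianPDFReal 0 v).comp_add_right 2).intervalIntegrable fun x hx => ?_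
    exact gaussianPDFReal_le_add_two v (by linarith [hx.2])
  -- Split the integral of the density over `[-1 - b, 1 - a]`, once at `1 - b` and once at `-1 - a`.
  have h₁ := intervalIntegral.integral_add_adjacent_intervals
    (hint (-1 - b) (1 - b)) (hint (1 - b) (1 - a))
  have h₂ := intervalIntegral.integral_add_adjacent_intervals
    (hint (-1 - b) (-1 - a)) (hint (-1 - a) (1 - a))
  linarith

lemma setOf_one_lt_abs_eq : {x : ℝ | 1 < |x|} = (Set.Icc (-1) 1)ᶜ := by
  ext x
  simp only [Set.mem_ofPred_eq, Set.mem_compl_iff, Set.mem_Icc, ← abs_le, not_le]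

lemma gaussianReal_exceed_mono {v : ℝ≥0} (hv : v ≠ 0) {a b : ℝ} (ha : 0 ≤ a) (hab : a ≤ b) :
    gaussianReal a v {x : ℝ | 1 < |x|} ≤ gaussianReal b v {x : ℝ | 1 < |x|} := by
  rw [setOf_one_lt_abs_eq, prob_compl_eq_one_sub measurableSet_Icc,
    prob_compl_eq_one_sub measurableSet_Icc]
  exact tsub_le_tsub_left (gaussianReal_Icc_antitone hv ha hab) 1

lemma gaussianReal_exceed_neg (m : ℝ) (v : ℝ≥0) :
    gaussianReal (-m) v {x : ℝ | 1 < |x|} = gaussianReal m v {x : ℝ | 1 < |x|} := by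
  rw [← gaussianReal_map_neg, Measure.map_apply measurable_neg
    (by rw [setOf_one_lt_abs_eq]; exact measurableSet_Icc.compl)]
  simp

lemma gaussianReal_exceed_abs (m : ℝ) (v : ℝ≥0) :
    gaussianReal |m| v {x : ℝ | 1 < |x|} = gaussianReal m v {x : ℝ | 1 < |x|} := by
  rcases abs_choice m with h | h
  · rw [h]
  · rw [h, gaussianReal_exceed_neg]

/-- Lemma 4: over a symmetric set `C`, a maximizer `d₁` of the (linear) mean `f d` and a
maximizer `d₂` of the exceedance probability `P d = gaussianReal (f d) v {x : |x| > 1}`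
yield the same exceedance probability. -/
theorem lemma4_mean_max_eq_prob_max {n : ℕ} (C : Set (Fin n → ℝ))
    (hsym : ∀ d ∈ C, -d ∈ C) (f : (Fin n → ℝ) →ₗ[ℝ] ℝ) (v : ℝ≥0) (hv : v ≠ 0)
    (P : (Fin n → ℝ) → ℝ≥0∞)
    (hP : ∀ d, P d = gaussianReal (f d) v {x : ℝ | 1 < |x|})
    (d₁ d₂ : Fin n → ℝ) (hd₁ : d₁ ∈ C) (hd₂ : d₂ ∈ C)
    (hmax₁ : ∀ d ∈ C, f d ≤ f d₁) (hmax₂ : ∀ d ∈ C, P d ≤ P d₂) :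
    P d₁ = P d₂ := by
  refine le_antisymm (hmax₂ d₁ hd₁) ?_
  have habs : |f d₂| ≤ f d₁ := by
    have hneg := hmax₁ (-d₂) (hsym d₂ hd₂)
    rw [map_neg] at hneg
    exact abs_le'.2 ⟨hmax₁ d₂ hd₂, hneg⟩
  rw [hP, hP, ← gaussianReal_exceed_abs (f d₂)]
  exact gaussianReal_exceed_mono hv (abs_nonneg _) habs
end

section
/- (Unboundedness in the absence of Assumption 3) Let Q, T_R, F, Z be real matrices with n columns, let ε' ≥ 0, and let C = { d ∈ ℝⁿ : ‖Q d‖_∞ ≤ 1 and (T_R d) · (T_R d) ≤ ε' and F d = 0 }. If there exists d₀ ∈ ℝⁿ with Q d₀ = 0, T_R d₀ = 0, F d₀ = 0, and Z d₀ ≠ 0, then there exists a row index i such that the set { (Z d)ᵢ : d ∈ C } is not bounded above; i.e., the attacker can make some critical-state mean arbitrarily large while remaining feasible. -/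
/-! The whole line `ℝ d₀` is feasible, because `Q`, `TR` and `F` vanish on it. A coordinate `i` with
`(Z d₀)ᵢ ≠ 0` is a nonzero linear function on this line, so it takes every real value there. -/

open Matrix

/-- Unboundedness in the absence of Assumption 3: if some direction `d₀` lies in the null
spaces of `Q`, `T_R`, and `F` but not of `Z`, then some critical-state mean `(Z d)ᵢ` is
unbounded above over the feasible set `C`. -/
theorem unbounded_without_assumption3 {n p q s m : ℕ}
    (Q : Matrix (Fin p) (Fin n) ℝ) (TR : Matrix (Fin q) (Fin n) ℝ)
    (F : Matrix (Fin s) (Fin n) ℝ) (Z : Matrix (Fin m) (Fin n) ℝ)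
    (ε' : ℝ) (hε' : 0 ≤ ε')
    (C : Set (Fin n → ℝ))
    (hC : C = {d : Fin n → ℝ |
        ‖Q.mulVec d‖ ≤ 1 ∧ TR.mulVec d ⬝ᵥ TR.mulVec d ≤ ε' ∧ F.mulVec d = 0})
    (d₀ : Fin n → ℝ) (hQ : Q.mulVec d₀ = 0) (hTR : TR.mulVec d₀ = 0)
    (hF : F.mulVec d₀ = 0) (hZ : Z.mulVec d₀ ≠ 0) :
    ∃ i : Fin m, ¬ BddAbove ((fun d => Z.mulVec d i) '' C) := by
  obtain ⟨i, hi⟩ := Function.ne_iff.mp hZ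
  rw [Pi.zero_apply] at hi
  refine ⟨i, ?_⟩
  rintro ⟨B, hB⟩
  -- This multiple of `d₀` has `i`-th critical-state mean exactly `B + 1`.
  have h := hB ⟨((B + 1) / (Z.mulVec d₀ i)) • d₀, ?_, rfl⟩
  · simp only [mulVec_smul, Pi.smul_apply, smul_eq_mul, div_mul_cancel₀ _ hi] at h
    linarith
  · rw [hC]
    simp [mulVec_smul, hQ, hTR, hF, hε']
end
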